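/- The power series A(u) = Σ_{p≥0} a_p·u^p has radius of convergence exactly u_c, admits no analytic continuation to any neighborhood of the point u_c (i.e. u_c is its dominant singularity), and admits an analytic continuation to a slit disk at u_c. -/

import Mathlib

noncomputable def nuc : ℝ := 1 + 2 * Real.sqrt 7

noncomputable def tc : ℝ := Real.sqrt 10 / (8 * (7 + Real.sqrt 7) ^ ((3:ℝ)/2))

noncomputable def uc : ℝ := (6/5) * (7 + Real.sqrt 7) * tc

/-- The rational parametrization `û` of the `u`-variable. -/
noncomputable def uhat (H : ℂ) : ℂ :=
  ((uc : ℂ) / 3) * H * (10 - 12 * H + 6 * H ^ 2 - H ^ 3)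

/-- The rational parametrization `Ẑ₀`. -/
noncomputable def Z0hat (H : ℂ) : ℂ :=
  (1/10) * (1 - (1 - (Real.sqrt 7 : ℂ)) * H + 3 * H ^ 2 - H ^ 3)
    * (10 - 12 * H + 6 * H ^ 2 - H ^ 3)

/-- The rational parametrization `Ẑ₁`. -/
noncomputable def Z1hat (H : ℂ) : ℂ :=
  (3 / (10 * (uc : ℂ))) *
    ((Real.sqrt 7 : ℂ) - 1 + H - 3 * (4 - 3 * H + H ^ 2) / (10 - 12 * H + 6 * H ^ 2 - H ^ 3))

/-- The rational parametrization `Â`. -/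
noncomputable def Ahat (H : ℂ) : ℂ :=
  (1/10) * ((((3:ℝ)/2) ^ ((7:ℝ)/3) : ℝ) : ℂ) * (9 - 8 * H + 3 * H ^ 2) / (3 - 3 * H + H ^ 2) ^ 2

/-- The slit disk at `x > 0` of margin `ε > 0`. -/
def slitDisk (x ε : ℝ) : Set ℂ :=
  Metric.ball (0 : ℂ) (x + ε) \ (Complex.ofReal '' Set.Icc x (x + ε))

/-!
The only critical values of the polynomial `û` are `u_c` (at `H = 1`) and `25 u_c / 16` (at
`H = 5 / 2`), so `û` is a covering over the simply connected domain `ℂ ∖ [u_c, ∞)`, and the branch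
of `û⁻¹` with `0 ↦ 0` extends holomorphically to that domain. The image of this branch is connected,
hence stays in one sheet of `û`, which lies in `Re H < 1` and therefore avoids the poles of `Â`. So
`Â ∘ û⁻¹` is holomorphic off `[u_c, ∞)`, which yields both the convergence for `|u| < u_c` and the
continuation to a slit disk.

An analytic `g` at `u_c` extending `A` would satisfy `g ∘ û = Â` near `H = 1`. This is impossible
because `û'(1) = 0` while `Â'(1) ≠ 0`. A radius of convergence larger than `u_c` would produce such
a `g`, namely the sum of the series.
-/

open Filter Topology Set

section PowerSeries

theorem hasFPowerSeriesAt_ofScalars_zero_iff {𝕜 : Type*} [NontriviallyNormedField 𝕜] {a : ℕ → 𝕜}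
    {f : 𝕜 → 𝕜} : HasFPowerSeriesAt f (FormalMultilinearSeries.ofScalars 𝕜 a) 0 ↔
      ∀ᶠ u in 𝓝 0, HasSum (fun p => a p * u ^ p) (f u) := by
  simp only [hasFPowerSeriesAt_iff, FormalMultilinearSeries.coeff_ofScalars, zero_add, smul_eq_mul,
    mul_comm]

theorem hasSum_mul_pow_of_differentiableOn_ball {a : ℕ → ℂ} {f : ℂ → ℂ} {r : ℝ}
    (hf : DifferentiableOn ℂ f (Metric.ball 0 r))
    (ha : ∀ᶠ u in 𝓝 0, HasSum (fun p => a p * u ^ p) (f u)) {u : ℂ} (hu : ‖u‖ < r) :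
    HasSum (fun p => a p * u ^ p) (f u) := by
  obtain ⟨s, hus, hsr⟩ := exists_between hu
  lift s to NNReal using (norm_nonneg u).trans hus.le
  have hcauchy : HasFPowerSeriesOnBall f (cauchyPowerSeries f 0 s) 0 s :=
    (hf.mono (Metric.closedBall_subset_ball hsr)).hasFPowerSeriesOnBall
      (NNReal.coe_pos.1 ((norm_nonneg u).trans_lt hus))
  obtain ⟨t, hlocal⟩ := hasFPowerSeriesAt_ofScalars_zero_iff.2 ha
  have hu_mem : u ∈ Metric.eball 0 (s : ENNReal) := by
    simpa only [Metric.eball_coe, mem_ball_zero_iff] using hus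
  simpa only [FormalMultilinearSeries.ofScalars_apply_eq, smul_eq_mul, zero_add] using
    (hlocal.exchange_radius hcauchy).hasSum hu_mem

theorem analyticAt_tsum_mul_pow_of_summable {𝕜 : Type*} [NontriviallyNormedField 𝕜]
    [CompleteSpace 𝕜] {a : ℕ → 𝕜} {u₀ w : 𝕜} (hs : Summable fun p => a p * u₀ ^ p)
    (hw : ‖w‖ < ‖u₀‖) : AnalyticAt 𝕜 (fun u => ∑' p, a p * u ^ p) w := by
  let P := FormalMultilinearSeries.ofScalars 𝕜 a
  have hrad : (‖u₀‖₊ : ENNReal) ≤ P.radius := by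
    refine P.le_radius_of_tendsto (l := 0) ?_
    simpa only [P, FormalMultilinearSeries.ofScalars_norm, norm_mul, norm_pow, coe_nnnorm,
      norm_zero] using hs.tendsto_atTop_zero.norm
  have hw_lt : ‖w‖ₑ < P.radius :=
    lt_of_lt_of_le (ENNReal.coe_lt_coe.2 (by exact_mod_cast hw)) hrad
  have hsum : P.sum = fun u => ∑' p, a p * u ^ p :=
    FormalMultilinearSeries.ofScalarsSum_eq_tsum a
  rw [← hsum]
  exact (P.hasFPowerSeriesOnBall (bot_le.trans_lt hw_lt)).analyticAt_of_mem (by simpa using hw_lt)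

end PowerSeries

section LocalInverse

variable {𝕜 : Type*} [NontriviallyNormedField 𝕜]

theorem eventually_leftInverse_of_eventually_rightInverse [CompleteSpace 𝕜] {f g : 𝕜 → 𝕜}
    {f' z : 𝕜} (hf : HasStrictDerivAt f f' z) (hf' : f' ≠ 0) (hg : ContinuousAt g (f z))
    (hgz : g (f z) = z) (hfg : ∀ᶠ w in 𝓝 (f z), f (g w) = w) : ∀ᶠ x in 𝓝 z, g (f x) = x := by
  have hfc : Tendsto f (𝓝 z) (𝓝 (f z)) := hf.hasDerivAt.continuousAt
  have hgf : Tendsto (fun x => g (f x)) (𝓝 z) (𝓝 z) := by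
    simpa only [hgz, Function.comp_def] using hg.tendsto.comp hfc
  have hinv := hf.eventually_left_inverse hf'
  filter_upwards [hinv, hgf.eventually hinv, hfc.eventually hfg] with x hx hgx hfx
  rw [← hgx, hfx, hx]

theorem eventually_comp_ne_of_hasDerivAt_zero {f g φ : 𝕜 → 𝕜} {z : 𝕜} (hφ : AnalyticAt 𝕜 φ z)
    (hφ' : HasDerivAt φ 0 z) (hg : AnalyticAt 𝕜 g (φ z)) (hf : AnalyticAt 𝕜 f z)
    (hf' : deriv f z ≠ 0) : ∀ᶠ x in 𝓝[≠] z, g (φ x) ≠ f x := by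
  refine ((hg.comp hφ).eventually_eq_or_eventually_ne hf).resolve_left fun heq => hf' ?_
  have hcomp : HasDerivAt (g ∘ φ) 0 z := by
    simpa using hg.differentiableAt.hasDerivAt.comp z hφ'
  exact (EventuallyEq.deriv_eq heq).symm.trans hcomp.deriv

end LocalInverse

section Sections

theorem exists_continuousOn_rightInvOn_of_isCoveringMapOn {E X : Type*} [TopologicalSpace E]
    [TopologicalSpace X] [LocallyPathConnectedSpace X] {f : E → X} {U : Set X}
    (hf : IsCoveringMapOn f U) (hUc : IsSimplyConnected U) (hUo : IsOpen U) {e : E}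
    (he : f e ∈ U) : ∃ σ : X → E, ContinuousOn σ U ∧ RightInvOn σ f U ∧ σ (f e) = e := by
  classical
  have := hUc.simplyConnectedSpace
  have := hUo.locallyPathConnectedSpace
  obtain ⟨F, ⟨hFe, hF⟩, -⟩ := hf.existsUnique_continuousMap_lifts
    ⟨Subtype.val, continuous_subtype_val⟩ (a₀ := (⟨f e, he⟩ : U)) (e₀ := e) rfl Subtype.property
  let σ : X → E := fun x => if hx : x ∈ U then F ⟨x, hx⟩ else e
  have hσ : ∀ x : U, σ x = F x := fun x => dif_pos x.2
  refine ⟨σ, ?_, fun x hx => ?_, (hσ ⟨f e, he⟩).trans hFe⟩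
  · rw [continuousOn_iff_continuous_domRestrict]
    exact (map_continuous F).congr fun x => (hσ x).symm
  · exact (congrArg f (hσ ⟨x, hx⟩)).trans (congrFun hF ⟨x, hx⟩)

open scoped Polynomial in
theorem exists_differentiableOn_rightInvOn_eval {P : ℂ[X]} {U : Set ℂ}
    (hUc : IsSimplyConnected U) (hUo : IsOpen U)
    (hcrit : ∀ z, P.derivative.eval z = 0 → P.eval z ∉ U) {z₀ : ℂ} (hz₀ : P.eval z₀ ∈ U) :
    ∃ σ : ℂ → ℂ, DifferentiableOn ℂ σ U ∧ RightInvOn σ P.eval U ∧ σ (P.eval z₀) = z₀ := by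
  have hcov : IsCoveringMapOn P.eval U := P.isCoveringMapOn_eval.mono fun u hu => by
    rintro ⟨z, hz, rfl⟩
    exact hcrit z hz hu
  obtain ⟨σ, hσc, hσ, hσ₀⟩ :=
    exists_continuousOn_rightInvOn_of_isCoveringMapOn hcov hUc hUo hz₀
  refine ⟨σ, fun u hu => ?_, hσ, hσ₀⟩
  have hUu := hUo.mem_nhds hu
  have hregular : P.derivative.eval (σ u) ≠ 0 := fun h =>
    hcrit _ h (by simpa only [hσ hu] using hu)
  exact ((P.hasDerivAt (σ u)).of_local_left_inverse (hσc.continuousAt hUu) hregular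
    (mem_of_superset hUu hσ)).differentiableAt.differentiableWithinAt

end Sections

section CutPlane

/-- The plane cut along the ray `[x, ∞)`. It is encoded through `Complex.slitPlane`, which is cut
along `(-∞, 0]`. -/
def cutPlane (x : ℝ) : Set ℂ := (fun u : ℂ => x - u) ⁻¹' Complex.slitPlane

variable {x : ℝ}

theorem mem_cutPlane {u : ℂ} : u ∈ cutPlane x ↔ u.re < x ∨ u.im ≠ 0 := by
  simp [cutPlane, Complex.mem_slitPlane_iff]

theorem ofReal_mem_cutPlane {y : ℝ} : (y : ℂ) ∈ cutPlane x ↔ y < x := by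
  simp [mem_cutPlane]

theorem isOpen_cutPlane : IsOpen (cutPlane x) :=
  Complex.isOpen_slitPlane.preimage (by fun_prop)

theorem isSimplyConnected_cutPlane : IsSimplyConnected (cutPlane x) := by
  have : ContractibleSpace Complex.slitPlane :=
    Complex.starConvex_one_slitPlane.contractibleSpace ⟨1, Complex.one_mem_slitPlane⟩
  have hslit : IsSimplyConnected Complex.slitPlane :=
    inferInstanceAs (SimplyConnectedSpace Complex.slitPlane)
  exact (Homeomorph.subLeft (x : ℂ)).isSimplyConnected_preimage.2 hslit

theorem ball_subset_cutPlane : Metric.ball 0 x ⊆ cutPlane x := fun u hu =>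
  mem_cutPlane.2 (.inl ((Complex.re_le_norm u).trans_lt (mem_ball_zero_iff.1 hu)))

theorem zero_mem_cutPlane (hx : 0 < x) : 0 ∈ cutPlane x :=
  ball_subset_cutPlane (Metric.mem_ball_self hx)

theorem slitDisk_subset_cutPlane {ε : ℝ} : slitDisk x ε ⊆ cutPlane x := by
  rintro u ⟨hball, hslit⟩
  rw [mem_cutPlane]
  by_contra! hu
  have hlt : u.re < x + ε := (Complex.re_le_norm u).trans_lt (mem_ball_zero_iff.1 hball)
  exact hslit ⟨u.re, ⟨hu.1, hlt.le⟩, Complex.ext rfl hu.2.symm⟩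

end CutPlane

section Parametrization

theorem uc_pos : 0 < uc := by
  unfold uc tc
  positivity

theorem uhat_zero : uhat 0 = 0 := by simp [uhat]

theorem uhat_one : uhat 1 = uc := by
  unfold uhat
  ring

theorem uc_sub_uhat (H : ℂ) : uc - uhat H = uc / 3 * ((1 - H) ^ 3 * (3 - H)) := by
  unfold uhat
  ring

open Polynomial in
/-- The polynomial whose evaluation is `û`. -/
noncomputable def uhatPoly : ℂ[X] :=
  C ((uc : ℂ) / 3) * X * (10 - 12 * X + 6 * X ^ 2 - X ^ 3)

theorem eval_uhatPoly (H : ℂ) : uhatPoly.eval H = uhat H := by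
  simp [uhatPoly, uhat]

open Polynomial in
theorem eval_derivative_uhatPoly (H : ℂ) :
    uhatPoly.derivative.eval H = 2 * uc / 3 * ((1 - H) ^ 2 * (5 - 2 * H)) := by
  simp only [uhatPoly, derivative_mul, derivative_C, derivative_X, derivative_sub,
    derivative_ofNat, derivative_X_pow_succ, map_add, map_one, eval_add, eval_sub, eval_mul,
    eval_pow, eval_C, eval_X, eval_ofNat, eval_zero, eval_one, Nat.cast_one]
  ring

theorem hasStrictDerivAt_uhat (H : ℂ) :
    HasStrictDerivAt uhat (2 * uc / 3 * ((1 - H) ^ 2 * (5 - 2 * H))) H := by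
  simpa only [eval_uhatPoly, eval_derivative_uhatPoly] using uhatPoly.hasStrictDerivAt H

theorem analyticAt_uhat (H : ℂ) : AnalyticAt ℂ uhat H := by
  unfold uhat
  fun_prop

theorem uhat_notMem_cutPlane_of_eval_derivative_eq_zero {H : ℂ}
    (hH : uhatPoly.derivative.eval H = 0) : uhat H ∉ cutPlane uc := by
  have hfactor : (1 - H) ^ 2 * (5 - 2 * H) = 0 := by
    simpa [eval_derivative_uhatPoly, uc_pos.ne'] using hH
  rcases mul_eq_zero.1 hfactor with h | h
  · have hH : H = 1 := (sub_eq_zero.1 (eq_zero_of_pow_eq_zero h)).symm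
    rw [hH, uhat_one, ofReal_mem_cutPlane]
    exact lt_irrefl uc
  · have hvalue : uhat H = (25 / 16 * uc : ℝ) := by
      have hH : H = 5 / 2 := by linear_combination -h / 2
      rw [hH, uhat]
      push_cast
      ring
    rw [hvalue, ofReal_mem_cutPlane]
    linarith [uc_pos]

theorem uhat_ofReal (H : ℝ) :
    uhat H = ((uc - uc / 3 * ((1 - H) ^ 3 * (3 - H)) : ℝ) : ℂ) := by
  unfold uhat
  push_cast
  ring

theorem uhat_ofReal_mem_cutPlane {H : ℝ} (hH : H < 1) : uhat H ∈ cutPlane uc := by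
  have hfactor : 0 < (1 - H) ^ 3 * (3 - H) := mul_pos (pow_pos (sub_pos.2 hH) 3) (by linarith)
  rw [uhat_ofReal, ofReal_mem_cutPlane, sub_lt_self_iff]
  exact mul_pos (div_pos uc_pos three_pos) hfactor

theorem tendsto_uhat_ofReal_nhdsLT_one :
    Tendsto (fun H : ℝ => uhat H) (𝓝[<] 1) (𝓝[Metric.ball 0 uc] uc) := by
  have hcont : Continuous fun H : ℝ => uhat H := by
    unfold uhat
    fun_prop
  refine tendsto_nhdsWithin_iff.2
    ⟨(hcont.tendsto' 1 _ (by simpa using uhat_one)).mono_left nhdsWithin_le_nhds, ?_⟩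
  have hpos : ∀ᶠ H : ℝ in 𝓝[<] 1, 0 < (uhat H).re :=
    (Complex.continuous_re.comp hcont).continuousAt.eventually_mem
      (Ioi_mem_nhds (by simpa [uhat_one] using uc_pos)) |>.filter_mono nhdsWithin_le_nhds
  filter_upwards [hpos, self_mem_nhdsWithin] with H hre hH
  have hlt := uhat_ofReal_mem_cutPlane hH
  rw [uhat_ofReal] at hre hlt ⊢
  rw [Complex.ofReal_re] at hre
  rw [mem_ball_zero_iff, Complex.norm_real, Real.norm_of_nonneg hre.le]
  exact ofReal_mem_cutPlane.1 hlt

end Parametrization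

section PrincipalSheet

/-- The sheet of `û` containing `0`: the component of `û⁻¹ (ℂ ∖ [u_c, ∞))` to the left of the
curve `(Im H)² (3 - 2 Re H) = (1 - Re H)² (5 - 2 Re H)` through `1`, which `û` maps into the cut. -/
def principalSheet : Set ℂ :=
  {H | H.re < 1 ∧ H.im ^ 2 * (3 - 2 * H.re) < (1 - H.re) ^ 2 * (5 - 2 * H.re)}

theorem isOpen_principalSheet : IsOpen principalSheet :=
  (isOpen_lt (by fun_prop) (by fun_prop)).and (isOpen_lt (by fun_prop) (by fun_prop))

theorem closure_principalSheet_subset : closure principalSheet ⊆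
    {H | H.re ≤ 1 ∧ H.im ^ 2 * (3 - 2 * H.re) ≤ (1 - H.re) ^ 2 * (5 - 2 * H.re)} :=
  closure_minimal (fun _ hH => ⟨hH.1.le, hH.2.le⟩)
    ((isClosed_le (by fun_prop) (by fun_prop)).and (isClosed_le (by fun_prop) (by fun_prop)))

theorem im_uc_sub_uhat (H : ℂ) : (uc - uhat H).im =
    2 * uc / 3 * H.im * (H.im ^ 2 * (3 - 2 * H.re) - (1 - H.re) ^ 2 * (5 - 2 * H.re)) := by
  rw [uc_sub_uhat]
  simp only [pow_succ, pow_zero, Complex.mul_re, Complex.mul_im, Complex.sub_re, Complex.sub_im,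
    Complex.one_re, Complex.one_im, Complex.re_ofNat, Complex.im_ofNat, Complex.div_ofNat_re,
    Complex.div_ofNat_im, Complex.ofReal_re, Complex.ofReal_im]
  ring

theorem re_uc_sub_uhat_mul_of_boundary {H : ℂ}
    (hH : H.im ^ 2 * (3 - 2 * H.re) = (1 - H.re) ^ 2 * (5 - 2 * H.re)) :
    (uc - uhat H).re * (3 - 2 * H.re) ^ 2 = -(16 * uc / 3 * ((1 - H.re) * (2 - H.re)) ^ 3) := by
  rw [uc_sub_uhat]
  simp only [pow_succ, pow_zero, Complex.mul_re, Complex.mul_im, Complex.sub_re, Complex.sub_im,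
    Complex.one_re, Complex.one_im, Complex.re_ofNat, Complex.im_ofNat, Complex.div_ofNat_re,
    Complex.div_ofNat_im, Complex.ofReal_re, Complex.ofReal_im]
  linear_combination (uc / 3 * (H.im ^ 2 * (3 - 2 * H.re) + (1 - H.re) ^ 2 * (5 - 2 * H.re) -
    6 * (1 - H.re) * (2 - H.re) * (3 - 2 * H.re))) * hH

theorem closure_principalSheet_inter_preimage_subset :
    closure principalSheet ∩ uhat ⁻¹' cutPlane uc ⊆ principalSheet := by
  rintro H ⟨hclosure, hcut⟩
  obtain ⟨hre, hcurve⟩ := closure_principalSheet_subset hclosure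
  have hre_lt : H.re < 1 := hre.lt_of_ne fun hre_eq => by
    have him : H.im = 0 := by
      rw [hre_eq] at hcurve
      exact pow_eq_zero_iff two_ne_zero |>.1 (by nlinarith)
    obtain rfl : H = 1 := Complex.ext hre_eq him
    rw [mem_preimage, uhat_one, ofReal_mem_cutPlane] at hcut
    exact lt_irrefl uc hcut
  refine ⟨hre_lt, hcurve.lt_of_ne fun hboundary => ?_⟩
  have him : (uc - uhat H).im = 0 := by rw [im_uc_sub_uhat, hboundary, sub_self, mul_zero]
  have hre_pos : 0 < (uc - uhat H).re :=
    (Complex.mem_slitPlane_iff.1 hcut).resolve_right fun h => h him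
  have hpos : 0 < (uc - uhat H).re * (3 - 2 * H.re) ^ 2 :=
    mul_pos hre_pos (pow_pos (by linarith) 2)
  have hcube : 0 < ((1 - H.re) * (2 - H.re)) ^ 3 :=
    pow_pos (mul_pos (sub_pos.2 hre_lt) (by linarith)) 3
  rw [re_uc_sub_uhat_mul_of_boundary hboundary, neg_pos] at hpos
  exact hpos.not_gt (mul_pos (by linarith [uc_pos]) hcube)

end PrincipalSheet

section InverseBranch

theorem exists_differentiableOn_rightInvOn_uhat :
    ∃ σ : ℂ → ℂ, DifferentiableOn ℂ σ (cutPlane uc) ∧ RightInvOn σ uhat (cutPlane uc) ∧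
      σ 0 = 0 := by
  have h := exists_differentiableOn_rightInvOn_eval (P := uhatPoly) (z₀ := 0)
    isSimplyConnected_cutPlane isOpen_cutPlane
    (fun H hH => (eval_uhatPoly H).symm ▸ uhat_notMem_cutPlane_of_eval_derivative_eq_zero hH)
    (by simpa only [eval_uhatPoly, uhat_zero] using zero_mem_cutPlane uc_pos)
  simpa only [eval_uhatPoly, uhat_zero] using h

/-- The branch of `û⁻¹` on the plane cut along `[u_c, ∞)` taking the value `0` at `0`. Only its
values on the cut plane are specified. -/
noncomputable def uhatInv : ℂ → ℂ := exists_differentiableOn_rightInvOn_uhat.choose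

theorem differentiableOn_uhatInv : DifferentiableOn ℂ uhatInv (cutPlane uc) :=
  exists_differentiableOn_rightInvOn_uhat.choose_spec.1

theorem rightInvOn_uhatInv : RightInvOn uhatInv uhat (cutPlane uc) :=
  exists_differentiableOn_rightInvOn_uhat.choose_spec.2.1

theorem uhatInv_zero : uhatInv 0 = 0 :=
  exists_differentiableOn_rightInvOn_uhat.choose_spec.2.2

theorem analyticOnNhd_uhatInv : AnalyticOnNhd ℂ uhatInv (cutPlane uc) :=
  differentiableOn_uhatInv.analyticOnNhd isOpen_cutPlane

theorem mapsTo_uhatInv_principalSheet : MapsTo uhatInv (cutPlane uc) principalSheet := by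
  have hconn : IsPreconnected (uhatInv '' cutPlane uc) :=
    isSimplyConnected_cutPlane.isPathConnected.isConnected.isPreconnected.image _
      differentiableOn_uhatInv.continuousOn
  have hcut : uhatInv '' cutPlane uc ⊆ uhat ⁻¹' cutPlane uc :=
    image_subset_iff.2 fun u hu => by simpa only [mem_preimage, rightInvOn_uhatInv hu] using hu
  refine mapsTo_iff_image_subset.2 (hconn.subset_of_closure_inter_subset isOpen_principalSheet
    ⟨0, ⟨0, zero_mem_cutPlane uc_pos, uhatInv_zero⟩, by norm_num [principalSheet]⟩ ?_)
  exact fun H hH => closure_principalSheet_inter_preimage_subset ⟨hH.1, hcut hH.2⟩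

theorem eventually_uhatInv_uhat : ∀ᶠ H in 𝓝 0, uhatInv (uhat H) = H := by
  have hcut : cutPlane uc ∈ 𝓝 (uhat 0) :=
    isOpen_cutPlane.mem_nhds (by simpa only [uhat_zero] using zero_mem_cutPlane uc_pos)
  refine eventually_leftInverse_of_eventually_rightInverse (hasStrictDerivAt_uhat 0)
    (by simpa using uc_pos.ne') (analyticOnNhd_uhatInv _ (mem_of_mem_nhds hcut)).continuousAt
    (by rw [uhat_zero, uhatInv_zero]) (mem_of_superset hcut rightInvOn_uhatInv)

theorem uhatInv_uhat_ofReal {H : ℝ} (hH : H < 1) : uhatInv (uhat H) = H := by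
  have hanalytic : AnalyticOnNhd ℂ (uhatInv ∘ uhat) (Complex.ofReal '' Iio 1) := by
    rintro _ ⟨x, hx, rfl⟩
    exact (analyticOnNhd_uhatInv _ (uhat_ofReal_mem_cutPlane hx)).comp (analyticAt_uhat x)
  exact hanalytic.eqOn_of_preconnected_of_eventuallyEq analyticOnNhd_id
    (isPreconnected_Iio.image _ Complex.continuous_ofReal.continuousOn)
    ⟨0, mem_Iio.2 one_pos, Complex.ofReal_zero⟩ eventually_uhatInv_uhat ⟨H, hH, rfl⟩

end InverseBranch

section Ahat

/- Both poles `(3 ± i√3) / 2` of `Â` satisfy `|û| = u_c / √3`, so the bound on `Re H` cannot be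
replaced by a bound on `|û H|`. -/
theorem Ahat_denom_ne_zero {H : ℂ} (hH : H.re < 3 / 2) : 3 - 3 * H + H ^ 2 ≠ 0 := by
  intro h
  have hre : 3 - 3 * H.re + (H.re ^ 2 - H.im ^ 2) = 0 := by
    simpa [sq] using congrArg Complex.re h
  have him : H.im * (2 * H.re - 3) = 0 := by
    have hzero : (3 - 3 * H + H ^ 2).im = 0 := by rw [h, Complex.zero_im]
    simp only [sq, Complex.add_im, Complex.sub_im, Complex.mul_im, Complex.im_ofNat,
      Complex.re_ofNat] at hzero
    linear_combination hzero
  have him_zero : H.im = 0 := (mul_eq_zero.1 him).resolve_right (by linarith)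
  rw [him_zero] at hre
  nlinarith [sq_nonneg (2 * H.re - 3)]

theorem analyticAt_Ahat {H : ℂ} (hH : H.re < 3 / 2) : AnalyticAt ℂ Ahat H := by
  have hdenom : (3 - 3 * H + H ^ 2) ^ 2 ≠ 0 := pow_ne_zero 2 (Ahat_denom_ne_zero hH)
  unfold Ahat
  fun_prop (disch := assumption)

theorem hasDerivAt_Ahat_one :
    HasDerivAt Ahat (3 / 5 * (((3 : ℝ) / 2) ^ ((7 : ℝ) / 3) : ℝ)) 1 := by
  have hnum : HasDerivAt (fun H : ℂ => 9 - 8 * H + 3 * H ^ 2) (-2) 1 :=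
    ((((hasDerivAt_id' (1 : ℂ)).const_mul 8).const_sub 9).fun_add
      ((hasDerivAt_pow 2 (1 : ℂ)).const_mul 3)).congr_deriv (by norm_num)
  have hdenom : HasDerivAt (fun H : ℂ => 3 - 3 * H + H ^ 2) (-1) 1 :=
    ((((hasDerivAt_id' (1 : ℂ)).const_mul 3).const_sub 3).fun_add
      (hasDerivAt_pow 2 (1 : ℂ))).congr_deriv (by norm_num)
  refine ((hnum.const_mul _).fun_div (hdenom.fun_pow 2) (by norm_num)).congr_deriv ?_
  ring

theorem deriv_Ahat_one_ne_zero : deriv Ahat 1 ≠ 0 := by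
  have hscale : ((3 : ℝ) / 2) ^ ((7 : ℝ) / 3) ≠ 0 := by positivity
  rw [hasDerivAt_Ahat_one.deriv]
  exact mul_ne_zero (by norm_num) (Complex.ofReal_ne_zero.2 hscale)

theorem analyticOnNhd_Ahat_comp_uhatInv : AnalyticOnNhd ℂ (Ahat ∘ uhatInv) (cutPlane uc) :=
  fun u hu => (analyticAt_Ahat ((mapsTo_uhatInv_principalSheet hu).1.trans (by norm_num))).comp
    (analyticOnNhd_uhatInv u hu)

end Ahat

section Series

variable {a : ℕ → ℂ}

theorem hasSum_mul_pow_Ahat_uhatInv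
    (ha : ∀ᶠ H in 𝓝 0, HasSum (fun p => a p * uhat H ^ p) (Ahat H)) {u : ℂ} (hu : ‖u‖ < uc) :
    HasSum (fun p => a p * u ^ p) (Ahat (uhatInv u)) := by
  have hcut_nhds : cutPlane uc ∈ 𝓝 0 := isOpen_cutPlane.mem_nhds (zero_mem_cutPlane uc_pos)
  have htendsto : Tendsto uhatInv (𝓝 0) (𝓝 0) := by
    simpa only [uhatInv_zero] using
      (analyticOnNhd_uhatInv 0 (mem_of_mem_nhds hcut_nhds)).continuousAt.tendsto
  refine hasSum_mul_pow_of_differentiableOn_ball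
    (analyticOnNhd_Ahat_comp_uhatInv.differentiableOn.mono ball_subset_cutPlane) ?_ hu
  filter_upwards [htendsto.eventually ha, hcut_nhds] with w hw hcut
  simpa only [rightInvOn_uhatInv hcut, Function.comp_apply] using hw

theorem not_eventually_eq_tsum_of_analyticAt
    (ha : ∀ᶠ H in 𝓝 0, HasSum (fun p => a p * uhat H ^ p) (Ahat H)) {g : ℂ → ℂ}
    (hg : AnalyticAt ℂ g uc) :
    ¬ ∀ᶠ u in 𝓝[Metric.ball 0 uc] (uc : ℂ), g u = ∑' p, a p * u ^ p := by
  intro heq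
  have hcrit : HasDerivAt uhat 0 1 := by simpa using (hasStrictDerivAt_uhat 1).hasDerivAt
  have hne : ∀ᶠ H in 𝓝[≠] 1, g (uhat H) ≠ Ahat H :=
    eventually_comp_ne_of_hasDerivAt_zero (analyticAt_uhat 1) hcrit (uhat_one ▸ hg)
      (analyticAt_Ahat (by norm_num)) deriv_Ahat_one_ne_zero
  have hpunctured : Tendsto Complex.ofReal (𝓝[<] 1) (𝓝[≠] 1) :=
    Complex.continuous_ofReal.continuousWithinAt.tendsto_nhdsWithin
      fun _ hH => Complex.ofReal_injective.ne (ne_of_lt hH)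
  have hfalse : ∀ᶠ _H : ℝ in 𝓝[<] 1, False := by
    filter_upwards [hpunctured.eventually hne, tendsto_uhat_ofReal_nhdsLT_one.eventually heq,
      tendsto_uhat_ofReal_nhdsLT_one.eventually self_mem_nhdsWithin, self_mem_nhdsWithin]
      with H hneH heqH hball hH
    rw [heqH, (hasSum_mul_pow_Ahat_uhatInv ha (mem_ball_zero_iff.1 hball)).tsum_eq,
      uhatInv_uhat_ofReal hH] at hneH
    exact hneH rfl
  exact hfalse.exists.elim fun _ => id

end Series

/-- the power series `A(u) = Σ_p a_p u^p` has radius of convergence exactly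
`u_c`, admits no analytic continuation to any neighborhood of `u_c`, and admits an
analytic continuation to a slit disk at `u_c`. -/
theorem statement6
    (ρ : ℝ) (hρ : 0 < ρ)
    (a : ℕ → ℝ)
    -- `a p` are the Taylor coefficients of `A = Â ∘ û⁻¹` at `0`
    (hA : ∀ H : ℂ, ‖H‖ < ρ →
      HasSum (fun p : ℕ => (a p : ℂ) * uhat H ^ p) (Ahat H)) :
    (∀ u : ℂ, ‖u‖ < uc → Summable (fun p : ℕ => (a p : ℂ) * u ^ p)) ∧
    (∀ u : ℂ, uc < ‖u‖ → ¬ Summable (fun p : ℕ => (a p : ℂ) * u ^ p)) ∧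
    (¬ ∃ (g : ℂ → ℂ) (ε : ℝ), 0 < ε ∧
        (∀ w ∈ Metric.ball ((uc : ℝ) : ℂ) ε, AnalyticAt ℂ g w) ∧
        ∀ u : ℂ, ‖u‖ < uc → u ∈ Metric.ball ((uc : ℝ) : ℂ) ε →
          g u = ∑' p : ℕ, (a p : ℂ) * u ^ p) ∧
    (∃ (g : ℂ → ℂ) (ε : ℝ), 0 < ε ∧
        (∀ w ∈ slitDisk uc ε, AnalyticAt ℂ g w) ∧
        ∀ u : ℂ, ‖u‖ < uc → g u = ∑' p : ℕ, (a p : ℂ) * u ^ p) := by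
  have ha : ∀ᶠ H in 𝓝 0, HasSum (fun p => (a p : ℂ) * uhat H ^ p) (Ahat H) := by
    filter_upwards [Metric.ball_mem_nhds 0 hρ] with H hH using hA H (mem_ball_zero_iff.1 hH)
  refine ⟨fun u hu => (hasSum_mul_pow_Ahat_uhatInv ha hu).summable, fun u hu hsum => ?_, ?_,
    Ahat ∘ uhatInv, 1, one_pos,
    fun w hw => analyticOnNhd_Ahat_comp_uhatInv w (slitDisk_subset_cutPlane hw),
    fun u hu => (hasSum_mul_pow_Ahat_uhatInv ha hu).tsum_eq.symm⟩
  · have hnorm : ‖(uc : ℂ)‖ < ‖u‖ := by rwa [Complex.norm_of_nonneg uc_pos.le]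
    exact not_eventually_eq_tsum_of_analyticAt ha
      (analyticAt_tsum_mul_pow_of_summable hsum hnorm) (.of_forall fun _ => rfl)
  · rintro ⟨g, ε, hε, hg, hext⟩
    refine not_eventually_eq_tsum_of_analyticAt ha (hg _ (Metric.mem_ball_self hε)) ?_
    filter_upwards [self_mem_nhdsWithin, mem_nhdsWithin_of_mem_nhds (Metric.ball_mem_nhds _ hε)]
      with u hball hnear using hext u (mem_ball_zero_iff.1 hball) hnear
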